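/- Let n ≥ 2 and let X = (X_1, ..., X_n) be a vector of independent (not necessarily identically distributed) random variables with values in [0,1]. Then for every δ > 0, Pr{ sqrt(E[V_n(X)]) > sqrt(V_n(X)) + sqrt(2 ln(1/δ) / (n−1)) } ≤ δ. -/

import Mathlib

/-!
Write `Q(x) = ∑ xᵢ² - (∑ xᵢ)²/n = (n - 1) Vₙ(x)`. The theorem follows by Chernoff's method from
`𝔼 exp(-l Q) ≤ exp(-l (1 - l/2) 𝔼 Q)` for `0 ≤ l < 2`: on the bad event, with
`c = √(2 ln(1/δ)/(n-1))`, one has `Vₙ ≤ 𝔼Vₙ - c √(𝔼Vₙ)`, and `l = c / √(𝔼Vₙ)` gives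
the probability bound `exp(-(n-1) c²/2) = δ`.

The exponential moment is bounded by integrating out one coordinate at a time. Note that
`Q(x) = min_c ∑ (xᵢ - c)²`. When a coordinate with law `ν` of mean `m` and variance `σ²` is
integrated out, the term `(x - c)²` may be replaced by `ρ (m - c)²`, `ρ = 1 - l/2`, at the gain
of an additive constant `ρ (1 - 1/n) σ²` (`lintegral_exp_step`). Indeed, if the remaining weight is
`N` and the remaining optimal centre is `q ∈ [0,1]`, then the dependence on `x` is
`N/(N+1) (x - q)²`, and `exp(-u) ≤ 1 - u + u²/2` yields the coefficient
`κ = N (ρN + 1)/(N + 1)²` in front of `σ² + (m - q)²`. This `κ` is at least `ρN/(N+ρ)`, the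
coefficient of `(m - q)²` produced by a point of weight `ρ`, and at least `ρ (1 - 1/n)` because
`N ≥ ρ (n - 1)`. After all coordinates are integrated out, the exponent is
`ρ ((1 - 1/n) ∑ σᵢ² + ∑ mᵢ² - (∑ mᵢ)²/n) = ρ 𝔼 Q`.
-/

open MeasureTheory

/-- Sample mean `P_n(x) = (1/n) ∑ᵢ xᵢ`. -/
noncomputable def sampleMean (n : ℕ) (x : Fin n → ℝ) : ℝ := (∑ i, x i) / n

/-- Sample variance `V_n(x) = (1/(n(n-1))) ∑_{i<j} (xᵢ - xⱼ)² = (1/(2n(n-1))) ∑_{i,j} (xᵢ - xⱼ)²`. -/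
noncomputable def sampleVar (n : ℕ) (x : Fin n → ℝ) : ℝ :=
  (∑ i, ∑ j, (x i - x j) ^ 2) / (2 * (n : ℝ) * ((n : ℝ) - 1))

lemma exp_neg_le_quadratic {u : ℝ} (hu : 0 ≤ u) : Real.exp (-u) ≤ 1 - u + u ^ 2 / 2 := by
  have h := Real.quadratic_le_exp_of_nonneg hu
  have hpos : 0 ≤ 1 - u + u ^ 2 / 2 := by nlinarith [sq_nonneg (u - 1)]
  rw [Real.exp_neg, inv_le_iff_one_le_mul₀ (Real.exp_pos u)]
  have := mul_le_mul_of_nonneg_left h hpos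
  nlinarith [sq_nonneg (u ^ 2)]

/-- The exponent gained in one step dominates the contribution of a point of weight `ρ` placed
at the mean. -/
lemma coeff_ge_mean {N ρ : ℝ} (hN : 0 < N) (hρ : 0 < ρ) :
    ρ * N / (N + ρ) ≤ N * (ρ * N + 1) / (N + 1) ^ 2 := by
  rw [div_le_div_iff₀ (by positivity) (by positivity)]
  have : 0 ≤ N ^ 2 * (1 - ρ) ^ 2 := by positivity
  nlinarith

/-- The exponent gained in one step dominates the required multiple of the variance;
`M` stands for `n - 1`. -/
lemma coeff_ge_var {N ρ M : ℝ} (hM : 0 < M) (hρ : 0 < ρ) (hNM : ρ * M ≤ N) :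
    ρ * (M / (M + 1)) ≤ N * (ρ * N + 1) / (N + 1) ^ 2 := by
  have hN : 0 < N := lt_of_lt_of_le (by positivity) hNM
  rw [← mul_div_assoc, div_le_div_iff₀ (by positivity) (by positivity)]
  obtain ⟨d, rfl⟩ : ∃ d, N = ρ * M + d := ⟨N - ρ * M, by ring⟩
  have hd : 0 ≤ d := by linarith
  have h1 : 0 ≤ ρ * M ^ 2 * (1 - ρ) ^ 2 := by positivity
  have h2 : 0 ≤ d * M * (ρ ^ 2 + (1 - ρ) ^ 2) := by positivity
  have h3 : 0 ≤ ρ * d ^ 2 := by positivity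
  nlinarith

/-- Integrating out one coordinate `x` with law `ν`. The other points carry total weight `N` and
weighted sum `T`; `G` is the weighted sum of their squares. Up to a variance term in the exponent,
`x` is replaced by a point of weight `ρ` at the mean of `ν`. -/
lemma lintegral_exp_step (ν : Measure ℝ) [IsProbabilityMeasure ν]
    (hν : ∀ᵐ x ∂ν, x ∈ Set.Icc (0 : ℝ) 1) {l N ρ M T G : ℝ} (hl : 0 ≤ l)
    (hρ : ρ = 1 - l / 2) (hρ0 : 0 < ρ) (hM : 0 < M) (hNM : ρ * M ≤ N)
    (hT0 : 0 ≤ T) (hTN : T ≤ N) :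
    ∫⁻ x, ENNReal.ofReal (Real.exp (-l * (G + x ^ 2 - (T + x) ^ 2 / (N + 1)))) ∂ν ≤
      ENNReal.ofReal (Real.exp (-l * (G + ρ * (M / (M + 1)) * ((∫ x, x ^ 2 ∂ν) - (∫ x, x ∂ν) ^ 2)
        + ρ * (∫ x, x ∂ν) ^ 2 - (T + ρ * ∫ x, x ∂ν) ^ 2 / (N + ρ)))) := by
  have hN : 0 < N := lt_of_lt_of_le (by positivity) hNM
  have hb1 : MemLp (fun x : ℝ => x) 2 ν :=
    MemLp.of_bound (by fun_prop) 1 (by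
      filter_upwards [hν] with x hx; rw [Real.norm_eq_abs, abs_le]; constructor <;> linarith [hx.1, hx.2])
  have hi1 : Integrable (fun x : ℝ => x) ν := hb1.integrable (by norm_num)
  have hi2 : Integrable (fun x : ℝ => x ^ 2) ν := hb1.integrable_sq
  have hvar : 0 ≤ (∫ x, x ^ 2 ∂ν) - (∫ x, x ∂ν) ^ 2 := by
    have := ProbabilityTheory.variance_eq_sub hb1
    have h2 := ProbabilityTheory.variance_nonneg (fun x : ℝ => x) ν
    rw [this] at h2
    simpa using h2
  set s := ∫ x, x ^ 2 ∂ν with hs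
  set m := ∫ x, x ∂ν with hm
  set q := T / N with hq
  have hq0 : 0 ≤ q := by positivity
  have hq1 : q ≤ 1 := by rw [hq, div_le_one hN]; exact hTN
  have hTq : T = N * q := by rw [hq]; field_simp
  set α := N / (N + 1) with hα
  have hα0 : 0 ≤ α := by positivity
  set κ := N * (ρ * N + 1) / (N + 1) ^ 2 with hκ
  have hκα : κ = α * (1 - l * α / 2) := by
    have : l = 2 * (1 - ρ) := by linarith
    rw [hκ, hα, this]; field_simp; ring
  set K := G - T ^ 2 / N with hK
  have hpt : ∀ x ∈ Set.Icc (0 : ℝ) 1,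
      Real.exp (-l * (G + x ^ 2 - (T + x) ^ 2 / (N + 1))) ≤
        Real.exp (-l * K) * (1 - l * κ * (x ^ 2 - 2 * q * x + q ^ 2)) := by
    intro x hx
    have e : -l * (G + x ^ 2 - (T + x) ^ 2 / (N + 1)) = -l * K + -(l * (α * (x - q) ^ 2)) := by
      rw [hK, hα, hTq]; field_simp; ring
    rw [e, Real.exp_add]
    refine mul_le_mul_of_nonneg_left ?_ (Real.exp_pos _).le
    refine (exp_neg_le_quadratic (by positivity)).trans ?_
    have hsq : (x - q) ^ 2 ≤ 1 := by
      rw [sq_le_one_iff_abs_le_one, abs_le]; constructor <;> linarith [hx.1, hx.2]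
    have h4 : l ^ 2 * α ^ 2 * ((x - q) ^ 2 * (x - q) ^ 2) ≤ l ^ 2 * α ^ 2 * ((x - q) ^ 2 * 1) := by
      gcongr
    rw [hκα]
    nlinarith
  have hi3 : Integrable (fun x : ℝ => x ^ 2 - 2 * q * x) ν := hi2.sub (hi1.const_mul _)
  have hi4 : Integrable (fun x : ℝ => x ^ 2 - 2 * q * x + q ^ 2) ν := hi3.add (integrable_const _)
  have hint : Integrable (fun x : ℝ =>
      Real.exp (-l * K) * (1 - l * κ * (x ^ 2 - 2 * q * x + q ^ 2))) ν :=
    ((integrable_const _).sub (hi4.const_mul _)).const_mul _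
  calc _ ≤ ∫⁻ x, ENNReal.ofReal (Real.exp (-l * K) * (1 - l * κ * (x ^ 2 - 2 * q * x + q ^ 2))) ∂ν := by
        refine lintegral_mono_ae ?_
        filter_upwards [hν] with x hx using ENNReal.ofReal_le_ofReal (hpt x hx)
    _ = ENNReal.ofReal (∫ x, Real.exp (-l * K) * (1 - l * κ * (x ^ 2 - 2 * q * x + q ^ 2)) ∂ν) := by
        rw [ofReal_integral_eq_lintegral_ofReal hint]
        filter_upwards [hν] with x hx using (Real.exp_pos _).le.trans (hpt x hx)
    _ = ENNReal.ofReal (Real.exp (-l * K) * (1 - l * κ * (s - 2 * q * m + q ^ 2))) := by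
        rw [integral_const_mul, integral_sub (integrable_const _) (hi4.const_mul _),
          integral_const_mul, integral_add hi3 (integrable_const _),
          integral_sub hi2 (hi1.const_mul _), integral_const_mul]
        simp [hs, hm]
    _ ≤ _ := by
        refine ENNReal.ofReal_le_ofReal ?_
        have h1 := Real.add_one_le_exp (-(l * κ * (s - 2 * q * m + q ^ 2)))
        calc _ ≤ Real.exp (-l * K) * Real.exp (-(l * κ * (s - 2 * q * m + q ^ 2))) := by
              gcongr; linarith
          _ ≤ _ := by
              rw [← Real.exp_add, Real.exp_le_exp]
              have hA := mul_le_mul_of_nonneg_right (coeff_ge_var hM hρ0 hNM) hvar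
              have hB := mul_le_mul_of_nonneg_right (coeff_ge_mean hN hρ0) (sq_nonneg (m - q))
              rw [← hκ] at hA hB
              have e2 : ρ * m ^ 2 - (T + ρ * m) ^ 2 / (N + ρ) =
                  ρ * N / (N + ρ) * (m - q) ^ 2 - T ^ 2 / N := by
                rw [hTq]; field_simp; ring
              have hmain : G + ρ * (M / (M + 1)) * (s - m ^ 2) + ρ * m ^ 2
                  - (T + ρ * m) ^ 2 / (N + ρ) ≤ K + κ * (s - 2 * q * m + q ^ 2) := by
                rw [hK]; nlinarith
              nlinarith [mul_le_mul_of_nonneg_left hmain hl]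

lemma ae_pi_Icc {m : ℕ} (μ : Fin m → Measure ℝ) [∀ i, IsProbabilityMeasure (μ i)]
    (hμ : ∀ i, ∀ᵐ x ∂μ i, x ∈ Set.Icc (0 : ℝ) 1) :
    ∀ᵐ y ∂Measure.pi μ, ∀ i, y i ∈ Set.Icc (0 : ℝ) 1 := by
  rw [ae_all_iff]
  intro i
  exact (measurePreserving_eval μ i).quasiMeasurePreserving.ae (hμ i)

/-- The exponential moment bound when `m` coordinates are still random and the coordinates already
integrated out have been replaced by points in `[0,1]` of total weight `W` and weighted sum `A`
(their squares contribute only a constant, which is left out). The parameter `M` stands for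
`n - 1`; for the sample variance itself, `W = A = 0` and `m = M + 1`. -/
lemma lintegral_exp_le {l ρ M : ℝ} (hl : 0 ≤ l) (hρ : ρ = 1 - l / 2) (hρ0 : 0 < ρ) (hM : 0 < M)
    (m : ℕ) : ∀ (μ : Fin m → Measure ℝ) [∀ i, IsProbabilityMeasure (μ i)]
    (_ : ∀ i, ∀ᵐ x ∂μ i, x ∈ Set.Icc (0 : ℝ) 1) (W A : ℝ) (_ : 0 ≤ A) (_ : A ≤ W)
    (_ : ρ * (M + 1) ≤ W + ρ * m),
    ∫⁻ x, ENNReal.ofReal (Real.exp (-l * (∑ i, x i ^ 2 - (A + ∑ i, x i) ^ 2 / (W + m)))) ∂Measure.pi μ ≤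
      ENNReal.ofReal (Real.exp (-l * (
        ρ * (M / (M + 1)) * ∑ i, ((∫ x, x ^ 2 ∂μ i) - (∫ x, x ∂μ i) ^ 2)
        + ρ * ∑ i, (∫ x, x ∂μ i) ^ 2 - (A + ρ * ∑ i, ∫ x, x ∂μ i) ^ 2 / (W + ρ * m)))) := by
  induction m with
  | zero => intro μ _ _ W A _ _ _; simp
  | succ m ih =>
    intro μ _ hμ W A hA hAW hW
    have hl2 : ρ ≤ 1 := by linarith
    have hmp := (measurePreserving_piFinSuccAbove μ 0).symm
    rw [← hmp.lintegral_comp_emb (MeasurableEquiv.measurableEmbedding _),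
      lintegral_prod_symm _ (by fun_prop)]
    have hm0 : (∫ x, x ∂μ 0) ∈ Set.Icc (0 : ℝ) 1 := by
      have hi : Integrable (fun x : ℝ => x) (μ 0) :=
        Integrable.of_bound (by fun_prop) 1 (by
          filter_upwards [hμ 0] with x hx
          rw [Real.norm_eq_abs, abs_le]; constructor <;> linarith [hx.1, hx.2])
      constructor
      · exact integral_nonneg_of_ae (by filter_upwards [hμ 0] with x hx using hx.1)
      · calc _ ≤ ∫ x, (1 : ℝ) ∂μ 0 := integral_mono_ae hi (integrable_const _)
              (by filter_upwards [hμ 0] with x hx using hx.2)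
          _ = 1 := by simp
    have hmm : ρ * m ≤ m := by nlinarith [Nat.cast_nonneg (α := ℝ) m]
    push_cast at hW
    have hstep : ∀ᵐ y ∂Measure.pi (fun i : Fin m => μ i.succ),
        ∫⁻ x, ENNReal.ofReal (Real.exp (-l * ((∑ i, y i ^ 2) + x ^ 2
          - ((A + ∑ i, y i) + x) ^ 2 / ((W + m) + 1)))) ∂μ 0 ≤
        ENNReal.ofReal (Real.exp (-l * ((∑ i, y i ^ 2)
          + ρ * (M / (M + 1)) * ((∫ x, x ^ 2 ∂μ 0) - (∫ x, x ∂μ 0) ^ 2)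
          + ρ * (∫ x, x ∂μ 0) ^ 2
          - ((A + ∑ i, y i) + ρ * ∫ x, x ∂μ 0) ^ 2 / ((W + m) + ρ)))) := by
      filter_upwards [ae_pi_Icc _ (fun i : Fin m => hμ i.succ)] with y hy
      refine lintegral_exp_step (μ 0) (hμ 0) hl hρ hρ0 hM (by linarith) ?_ ?_
      · exact add_nonneg hA (Finset.sum_nonneg fun i _ => (hy i).1)
      · have : ∑ i, y i ≤ ∑ i : Fin m, (1 : ℝ) := Finset.sum_le_sum fun i _ => (hy i).2
        simp at this
        linarith
    have h2 := lintegral_mono_ae hstep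
    set s0 := ∫ x, x ^ 2 ∂μ 0
    set m0 := ∫ x, x ∂μ 0
    have hih := ih (fun i : Fin m => μ i.succ) (fun i => hμ i.succ) (W + ρ) (A + ρ * m0)
      (by have := mul_nonneg hρ0.le hm0.1; linarith)
      (by have := mul_le_mul_of_nonneg_left hm0.2 hρ0.le; linarith) (by linarith)
    have h3 := mul_le_mul_right hih
      (ENNReal.ofReal (Real.exp (-l * (ρ * (M / (M + 1)) * (s0 - m0 ^ 2) + ρ * m0 ^ 2))))
    rw [← lintegral_const_mul _ (by fun_prop)] at h3
    simp_rw [← ENNReal.ofReal_mul (Real.exp_pos _).le, ← Real.exp_add] at h3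
    refine Eq.trans_le ?_ (h2.trans (Eq.trans_le ?_ (h3.trans_eq ?_)))
    · refine lintegral_congr fun y => lintegral_congr fun x => ?_
      simp [Fin.sum_univ_succ, MeasurableEquiv.piFinSuccAbove]
      ring_nf
    · refine lintegral_congr fun y => ?_
      ring_nf
    · simp only [Fin.sum_univ_succ]
      change _ = ENNReal.ofReal (Real.exp (-l * (ρ * (M / (M + 1)) * (s0 - m0 ^ 2 + _)
        + ρ * (m0 ^ 2 + _) - (A + ρ * (m0 + _)) ^ 2 / _)))
      push_cast
      ring_nf

lemma sampleVar_eq (n : ℕ) (hn : 2 ≤ n) (x : Fin n → ℝ) :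
    sampleVar n x = (∑ i, x i ^ 2 - (∑ i, x i) ^ 2 / n) / ((n : ℝ) - 1) := by
  have hn' : (2 : ℝ) ≤ n := by exact_mod_cast hn
  have h1 : (n : ℝ) ≠ 0 := by positivity
  have h2 : (n : ℝ) - 1 ≠ 0 := by linarith
  have h : ∑ i, ∑ j, (x i - x j) ^ 2 = 2 * n * ∑ i, x i ^ 2 - 2 * (∑ i, x i) ^ 2 := by
    simp only [sub_sq, Finset.sum_add_distrib, Finset.sum_sub_distrib, Finset.sum_const,
      Finset.card_univ, Fintype.card_fin, nsmul_eq_mul, ← Finset.mul_sum, ← Finset.sum_mul]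
    ring
  rw [sampleVar, h]
  field_simp

lemma integral_sampleVar (n : ℕ) (hn : 2 ≤ n)
    (μ : Fin n → Measure ℝ) [∀ i, IsProbabilityMeasure (μ i)]
    (hrange : ∀ i, ∀ᵐ x ∂μ i, x ∈ Set.Icc (0 : ℝ) 1) :
    ((n : ℝ) - 1) * ∫ z, sampleVar n z ∂Measure.pi μ =
      ((n : ℝ) - 1) / n * ∑ i, ((∫ x, x ^ 2 ∂μ i) - (∫ x, x ∂μ i) ^ 2)
        + ∑ i, (∫ x, x ∂μ i) ^ 2 - (∑ i, ∫ x, x ∂μ i) ^ 2 / n := by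
  have hn' : (2 : ℝ) ≤ n := by exact_mod_cast hn
  have h1 : (n : ℝ) ≠ 0 := by positivity
  have h2 : (n : ℝ) - 1 ≠ 0 := by linarith
  have hb : ∀ i, MemLp (fun x : ℝ => x) 2 (μ i) := fun i =>
    MemLp.of_bound (by fun_prop) 1 (by
      filter_upwards [hrange i] with x hx
      rw [Real.norm_eq_abs, abs_le]; constructor <;> linarith [hx.1, hx.2])
  have hbp : ∀ i, MemLp (fun z : Fin n → ℝ => z i) 2 (Measure.pi μ) := fun i =>
    (hb i).comp_measurePreserving (measurePreserving_eval μ i)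
  have hS : MemLp (fun z : Fin n → ℝ => ∑ i, z i) 2 (Measure.pi μ) :=
    memLp_finsetSum _ fun i _ => hbp i
  have hm : ∫ z : Fin n → ℝ, ∑ i, z i ∂Measure.pi μ = ∑ i, ∫ x, x ∂μ i := by
    rw [integral_finsetSum _ fun i _ => (hbp i).integrable (by norm_num)]
    exact Finset.sum_congr rfl fun i _ =>
      integral_comp_eval (μ := μ) (f := fun x : ℝ => x) aestronglyMeasurable_id
  have hsq : ∫ z : Fin n → ℝ, ∑ i, z i ^ 2 ∂Measure.pi μ = ∑ i, ∫ x, x ^ 2 ∂μ i := by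
    rw [integral_finsetSum _ fun i _ => (hbp i).integrable_sq]
    exact Finset.sum_congr rfl fun i _ =>
      integral_comp_eval (μ := μ) (i := i) (f := fun x : ℝ => x ^ 2)
        (hb i).integrable_sq.aestronglyMeasurable
  have hvar : ∫ z : Fin n → ℝ, (∑ i, z i) ^ 2 ∂Measure.pi μ =
      ∑ i, ((∫ x, x ^ 2 ∂μ i) - (∫ x, x ∂μ i) ^ 2) + (∑ i, ∫ x, x ∂μ i) ^ 2 := by
    have h := ProbabilityTheory.variance_sum_pi hb
    have e : (∑ i, fun z : Fin n → ℝ => z i) = fun z : Fin n → ℝ => ∑ i, z i := by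
      ext z; simp
    rw [e, ProbabilityTheory.variance_eq_sub hS, hm] at h
    have h' : ∀ i, ProbabilityTheory.variance (fun x : ℝ => x) (μ i)
        = (∫ x, x ^ 2 ∂μ i) - (∫ x, x ∂μ i) ^ 2 := fun i => by
      rw [ProbabilityTheory.variance_eq_sub (hb i)]; simp
    simp only [h', Pi.pow_apply] at h
    linarith
  simp only [sampleVar_eq n hn]
  rw [integral_div, integral_sub (integrable_finsetSum _ fun i _ => (hbp i).integrable_sq)
    (hS.integrable_sq.div_const _), integral_div, hsq, hvar, Finset.sum_sub_distrib]
  field_simp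
  ring

/-- **Theorem 11, (8)**: upper confidence bound for the standard deviation. For independent
(not necessarily identically distributed) `[0,1]`-valued `X₁, …, Xₙ`, `n ≥ 2`, `δ > 0`:
`Pr{ √(𝔼Vₙ) > √(Vₙ(𝐗)) + √(2 ln(1/δ)/(n-1)) } ≤ δ`. -/
theorem stdev_upper_bound (n : ℕ) (hn : 2 ≤ n)
    (μ : Fin n → Measure ℝ) [∀ i, IsProbabilityMeasure (μ i)]
    (hrange : ∀ i, ∀ᵐ x ∂μ i, x ∈ Set.Icc (0 : ℝ) 1) (δ : ℝ) (hδ : 0 < δ) :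
    ((Measure.pi μ)
      {X | Real.sqrt (∫ z, sampleVar n z ∂Measure.pi μ) >
        Real.sqrt (sampleVar n X) +
          Real.sqrt (2 * Real.log (1 / δ) / ((n : ℝ) - 1))}).toReal ≤ δ := by
  have hn' : (2 : ℝ) ≤ n := by exact_mod_cast hn
  have hM : 0 < (n : ℝ) - 1 := by linarith
  rcases le_or_gt 1 δ with hδ1 | hδ1
  · exact (ENNReal.toReal_mono ENNReal.one_ne_top prob_le_one).trans (by simpa using hδ1)
  have hL : 0 < Real.log (1 / δ) := Real.log_pos (by rw [lt_div_iff₀ hδ]; linarith)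
  have hVnonneg : ∀ x, 0 ≤ sampleVar n x := fun x =>
    div_nonneg (by positivity) (by positivity)
  have hEV := integral_sampleVar n hn μ hrange
  set E := ∫ z, sampleVar n z ∂Measure.pi μ with hE
  set c := Real.sqrt (2 * Real.log (1 / δ) / ((n : ℝ) - 1)) with hc
  have hE0 : 0 ≤ E := integral_nonneg hVnonneg
  have hc0 : 0 < c := Real.sqrt_pos.2 (by positivity)
  have hcsq : c ^ 2 = 2 * Real.log (1 / δ) / ((n : ℝ) - 1) := Real.sq_sqrt (by positivity)
  rcases le_or_gt (Real.sqrt E) c with hcE | hcE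
  · -- The bad event is empty.
    have : {X | Real.sqrt E > Real.sqrt (sampleVar n X) + c} = ∅ := by
      ext X
      simp only [Set.mem_ofPred_eq, Set.mem_empty_iff_false, iff_false, not_lt, gt_iff_lt]
      linarith [Real.sqrt_nonneg (sampleVar n X)]
    rw [this]
    simpa using hδ.le
  set r := Real.sqrt E with hr
  have hr0 : 0 < r := hc0.trans hcE
  have hrE : r ^ 2 = E := Real.sq_sqrt hE0
  obtain ⟨l, hl⟩ : ∃ l, l = c / r := ⟨_, rfl⟩
  have hl0 : 0 < l := by rw [hl]; positivity
  have hl1 : l < 1 := by rw [hl, div_lt_one hr0]; exact hcE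
  have hclr : c = l * r := by rw [hl]; field_simp
  have hρ0 : 0 < 1 - l / 2 := by linarith
  have hmgf := lintegral_exp_le hl0.le rfl hρ0 hM n μ hrange 0 0 le_rfl le_rfl (by linarith)
  have hexp : ((1 - l / 2) * (((n : ℝ) - 1) / ((n : ℝ) - 1 + 1)) *
        ∑ i, ((∫ x, x ^ 2 ∂μ i) - (∫ x, x ∂μ i) ^ 2)
      + (1 - l / 2) * ∑ i, (∫ x, x ∂μ i) ^ 2
      - (0 + (1 - l / 2) * ∑ i, ∫ x, x ∂μ i) ^ 2 / (0 + (1 - l / 2) * n))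
      = (1 - l / 2) * (((n : ℝ) - 1) * E) := by
    rw [hEV]
    generalize 1 - l / 2 = ρ at hρ0
    have : (n : ℝ) ≠ 0 := by positivity
    rw [sub_add_cancel, zero_add, zero_add]
    field_simp
  rw [hexp] at hmgf
  -- Chernoff's bound: on the bad event, `1 ≤ exp (l (n - 1) (E (1 - l) - V))`.
  have hmeas : (Measure.pi μ) {X | r > Real.sqrt (sampleVar n X) + c} ≤ ENNReal.ofReal δ := by
    calc _ ≤ ∫⁻ x, ENNReal.ofReal (Real.exp (l * (((n : ℝ) - 1) * (E * (1 - l))))) *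
          ENNReal.ofReal (Real.exp (-l * (∑ i, x i ^ 2 - (0 + ∑ i, x i) ^ 2 / (0 + n))))
            ∂Measure.pi μ := by
          refine meas_le_lintegral₀ (by fun_prop) fun x hx => ?_
          rw [← ENNReal.ofReal_mul (Real.exp_pos _).le, ← Real.exp_add, ENNReal.one_le_ofReal,
            Real.one_le_exp_iff]
          have hV : ∑ i, x i ^ 2 - (0 + ∑ i, x i) ^ 2 / (0 + n)
              = ((n : ℝ) - 1) * sampleVar n x := by
            rw [sampleVar_eq n hn, zero_add, zero_add]; field_simp
          rw [hV]
          have hx' : r > Real.sqrt (sampleVar n x) + c := hx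
          have hv0 := Real.sqrt_nonneg (sampleVar n x)
          have hvsq := Real.sq_sqrt (hVnonneg x)
          have hle : sampleVar n x ≤ E * (1 - l) := by
            have h1 : E * (1 - l) = r * (r - c) := by rw [← hrE, hclr]; ring
            rw [h1, ← hvsq]
            nlinarith
          have := mul_le_mul_of_nonneg_left hle (mul_pos hl0 hM).le
          nlinarith
      _ ≤ ENNReal.ofReal (Real.exp (l * (((n : ℝ) - 1) * (E * (1 - l))))) *
          ENNReal.ofReal (Real.exp (-l * ((1 - l / 2) * (((n : ℝ) - 1) * E)))) := by
          rw [lintegral_const_mul _ (by fun_prop)]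
          gcongr
      _ = ENNReal.ofReal δ := by
          rw [← ENNReal.ofReal_mul (Real.exp_pos _).le, ← Real.exp_add]
          congr 1
          have : l * (((n : ℝ) - 1) * (E * (1 - l))) + -l * ((1 - l / 2) * (((n : ℝ) - 1) * E))
              = Real.log δ := by
            have h2 : ((n : ℝ) - 1) * c ^ 2 = 2 * Real.log (1 / δ) := by
              rw [hcsq]; field_simp
            rw [one_div, Real.log_inv, hclr] at h2
            rw [← hrE]
            linarith
          rw [this, Real.exp_log hδ]
  exact ENNReal.toReal_le_of_le_ofReal hδ.le hmeas
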